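/- Let q : ℝ×ℝ → ℂ be a smooth solution of the TOFKN equation, and define the flux F(x,t) = (5/2)|q|⁶ + 3i|q|²(q_x·conj(q) − q·conj(q)_x) − (q_{xx}·conj(q) + q·conj(q)_{xx}) + q_x·conj(q)_x. Assume that for every t the functions x ↦ |q(x,t)|² and x ↦ ∂_t(|q(x,t)|²) are Lebesgue integrable on ℝ, that F(x,t) → 0 as x → ±∞ for every t, and that for every compact interval of times there is an integrable function g : ℝ → ℝ with |∂_t(|q(x,t)|²)| ≤ g(x) for all x and all t in that interval. Then the mass I₁(t) = ∫_ℝ |q(x,t)|² dx is constant in t. -/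

import Mathlib

noncomputable section

open Complex Matrix MeasureTheory ComplexConjugate Filter

abbrev Mat2 : Type := Matrix (Fin 2) (Fin 2) ℂ

/-- Partial derivative in the first (space) variable of a function on `ℝ × ℝ`. -/
def px (f : ℝ × ℝ → ℂ) : ℝ × ℝ → ℂ := fun p => deriv (fun y => f (y, p.2)) p.1

/-- Partial derivative in the second (time) variable of a function on `ℝ × ℝ`. -/
def pt (f : ℝ × ℝ → ℂ) : ℝ × ℝ → ℂ := fun p => deriv (fun s => f (p.1, s)) p.2

/-- Entrywise partial derivative in `x` of a matrix-valued function. -/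
def DxM (M : ℝ × ℝ → Mat2) : ℝ × ℝ → Mat2 :=
  fun p => Matrix.of fun i j => deriv (fun y => M (y, p.2) i j) p.1

/-- Entrywise partial derivative in `t` of a matrix-valued function. -/
def DtM (M : ℝ × ℝ → Mat2) : ℝ × ℝ → Mat2 :=
  fun p => Matrix.of fun i j => deriv (fun s => M (p.1, s) i j) p.2

def sigma1 : Mat2 := !![0, 1; 1, 0]
def sigma2 : Mat2 := !![0, -Complex.I; Complex.I, 0]
def sigma3 : Mat2 := !![1, 0; 0, -1]

/-- The potential matrix `Q`. -/
def Qmat (q : ℝ × ℝ → ℂ) : ℝ × ℝ → Mat2 := fun p => !![0, q p; -conj (q p), 0]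

/-- `|q|² = q ⬝ conj q`. -/
def msq (q : ℝ × ℝ → ℂ) : ℝ × ℝ → ℂ := fun p => q p * conj (q p)

/-- The `x`-part Lax matrix `X(λ; x, t) = iλ²σ₃ + λQ`. -/
def Xmat (q : ℝ × ℝ → ℂ) (l : ℂ) : ℝ × ℝ → Mat2 :=
  fun p => (Complex.I * l ^ 2) • sigma3 + l • Qmat q p

/-- The `t`-part Lax matrix `T(λ; x, t)`. -/
def Tmat (q : ℝ × ℝ → ℂ) (l : ℂ) : ℝ × ℝ → Mat2 := fun p =>
  (4 * l ^ 4 + (3 / 2) * (msq q p) ^ 2 - 2 * l ^ 2 * msq q p) • Xmat q l p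
    + (-2 * Complex.I * l ^ 3 + 3 * Complex.I * l * msq q p) • (sigma3 * DxM (Qmat q) p)
    - (l ^ 2 * (px q p * conj (q p) - q p * px (fun p' => conj (q p')) p)) • sigma3
    - l • DxM (DxM (Qmat q)) p

/-- The third-order flow Kaup–Newell equation
`q_t + q_{xxx} − 3i(|q|²q_x)_x − (3/2)(|q|⁴q)_x = 0`. -/
def TOFKN (q : ℝ × ℝ → ℂ) : Prop :=
  ∀ p : ℝ × ℝ,
    pt q p + px (px (px q)) p
      - 3 * Complex.I * px (fun p' => msq q p' * px q p') p
      - (3 / 2) * px (fun p' => (msq q p') ^ 2 * q p') p = 0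

/-- The flux appearing in the local conservation law for the mass density `|q|²`. -/
def fluxF (q : ℝ × ℝ → ℂ) : ℝ × ℝ → ℂ := fun p =>
  (5 / 2) * (msq q p) ^ 3
    + 3 * Complex.I * msq q p * (px q p * conj (q p) - q p * px (fun p' => conj (q p')) p)
    - (px (px q) p * conj (q p) + q p * px (px (fun p' => conj (q p'))) p)
    + px q p * px (fun p' => conj (q p')) p

/-!
The equation makes `|q|²` the density of a local conservation law `∂ₜ|q|² = ∂ₓF`: multiply the
equation by `conj q`, multiply its conjugate by `q`, and add. The domination allows differentiation
under the integral sign, so that `d/dt ∫ |q|² dx = ∫ ∂ₓF dx = F(+∞, t) - F(-∞, t)`, which vanishes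
as soon as the flux has the same limit at both ends of the line.
-/

theorem hasDerivAt_integral_of_conservation_law {E : Type*} [NormedAddCommGroup E]
    [NormedSpace ℝ E] [CompleteSpace E] {ρ ρ' : ℝ → ℝ → E} {F : ℝ → E} {g : ℝ → ℝ} {m n : E}
    {t : ℝ} {s : Set ℝ} (hs : s ∈ nhds t)
    (hρ_meas : ∀ᶠ τ in nhds t, AEStronglyMeasurable (ρ τ)) (hρ_int : Integrable (ρ t))
    (hρ : ∀ x, ∀ τ ∈ s, HasDerivAt (fun τ => ρ τ x) (ρ' τ x) τ)
    (hg : Integrable g) (hρ'_le : ∀ x, ∀ τ ∈ s, ‖ρ' τ x‖ ≤ g x)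
    (hF : ∀ x, HasDerivAt F (ρ' t x) x)
    (hbot : Tendsto F atBot (nhds m)) (htop : Tendsto F atTop (nhds n)) :
    HasDerivAt (fun τ => ∫ x, ρ τ x) (n - m) t := by
  have hρ'_eq : ρ' t = deriv F := funext fun x => (hF x).deriv.symm
  have hρ'_meas : AEStronglyMeasurable (ρ' t) :=
    hρ'_eq ▸ (stronglyMeasurable_deriv F).aestronglyMeasurable
  obtain ⟨hρ'_int, hderiv⟩ := hasDerivAt_integral_of_dominated_loc_of_deriv_le hs hρ_meas hρ_int
    hρ'_meas (.of_forall hρ'_le) hg (.of_forall hρ)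
  rwa [integral_of_hasDerivAt_of_tendsto hF hρ'_int hbot htop] at hderiv

theorem hasDerivAt_mul_conj {f : ℝ → ℂ} {f' : ℂ} {s : ℝ} (hf : HasDerivAt f f' s) :
    HasDerivAt (fun r => f r * conj (f r)) (f' * conj (f s) + f s * conj f') s :=
  hf.mul hf.star

section PartialDerivatives

variable {f g : ℝ × ℝ → ℂ} {x t : ℝ}

theorem hasDerivAt_px (hf : DifferentiableAt ℝ (fun y => f (y, t)) x) :
    HasDerivAt (fun y => f (y, t)) (px f (x, t)) x :=
  hf.hasDerivAt

theorem contDiff_px {n : WithTop ℕ∞} (hf : ContDiff ℝ (n + 1) fun y => f (y, t)) :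
    ContDiff ℝ n fun y => px f (y, t) :=
  hf.deriv'

theorem px_conj (f : ℝ × ℝ → ℂ) : px (fun p => conj (f p)) = fun p => conj (px f p) :=
  funext fun _ => deriv.star

theorem px_mul (hf : DifferentiableAt ℝ (fun y => f (y, t)) x)
    (hg : DifferentiableAt ℝ (fun y => g (y, t)) x) :
    px (fun p => f p * g p) (x, t) = px f (x, t) * g (x, t) + f (x, t) * px g (x, t) :=
  deriv_fun_mul hf hg

theorem px_pow (n : ℕ) (hf : DifferentiableAt ℝ (fun y => f (y, t)) x) :
    px (fun p => f p ^ n) (x, t) = n * f (x, t) ^ (n - 1) * px f (x, t) :=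
  deriv_fun_pow hf n

end PartialDerivatives

section LocalConservationLaw

variable {q : ℝ × ℝ → ℂ} {x t : ℝ}

theorem hasDerivAt_msq_left (hq : DifferentiableAt ℝ (fun y => q (y, t)) x) :
    HasDerivAt (fun y => msq q (y, t))
      (px q (x, t) * conj (q (x, t)) + q (x, t) * conj (px q (x, t))) x :=
  hasDerivAt_mul_conj hq.hasDerivAt

theorem hasDerivAt_msq_right (hq : DifferentiableAt ℝ (fun s => q (x, s)) t) :
    HasDerivAt (fun s => msq q (x, s))
      (pt q (x, t) * conj (q (x, t)) + q (x, t) * conj (pt q (x, t))) t :=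
  hasDerivAt_mul_conj hq.hasDerivAt

theorem px_msq (hq : DifferentiableAt ℝ (fun y => q (y, t)) x) :
    px (msq q) (x, t) = px q (x, t) * conj (q (x, t)) + q (x, t) * conj (px q (x, t)) :=
  (hasDerivAt_msq_left hq).deriv

theorem pt_msq (hq : DifferentiableAt ℝ (fun s => q (x, s)) t) :
    pt (msq q) (x, t) = pt q (x, t) * conj (q (x, t)) + q (x, t) * conj (pt q (x, t)) :=
  (hasDerivAt_msq_right hq).deriv

theorem TOFKN.pt_eq (h : TOFKN q) (hq : DifferentiableAt ℝ (fun y => q (y, t)) x)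
    (hqx : DifferentiableAt ℝ (fun y => px q (y, t)) x) :
    pt q (x, t) =
      -px (px (px q)) (x, t)
        + 3 * I * (px (msq q) (x, t) * px q (x, t) + msq q (x, t) * px (px q) (x, t))
        + 3 / 2 * (2 * msq q (x, t) * px (msq q) (x, t) * q (x, t)
          + msq q (x, t) ^ 2 * px q (x, t)) := by
  have hm := (hasDerivAt_msq_left hq).differentiableAt
  have hE := h (x, t)
  rw [px_mul hm hqx, px_mul (hm.fun_pow 2) hq, px_pow 2 hm] at hE
  push_cast at hE
  linear_combination hE

theorem hasDerivAt_fluxF (hq : ContDiff ℝ 3 fun y => q (y, t)) :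
    HasDerivAt (fun y => fluxF q (y, t))
      (15 / 2 * msq q (x, t) ^ 2 * px (msq q) (x, t)
        + 3 * I * (px (msq q) (x, t)
            * (px q (x, t) * conj (q (x, t)) - q (x, t) * conj (px q (x, t)))
          + msq q (x, t)
            * (px (px q) (x, t) * conj (q (x, t)) - q (x, t) * conj (px (px q) (x, t))))
        - (px (px (px q)) (x, t) * conj (q (x, t))
          + q (x, t) * conj (px (px (px q)) (x, t)))) x := by
  have hqx : ContDiff ℝ 2 fun y => px q (y, t) := contDiff_px hq
  have hqxx : ContDiff ℝ 1 fun y => px (px q) (y, t) := contDiff_px hqx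
  have dq := hasDerivAt_px (hq.differentiable three_ne_zero x)
  have dqx := hasDerivAt_px (hqx.differentiable two_ne_zero x)
  have dqxx := hasDerivAt_px (hqxx.differentiable one_ne_zero x)
  have dm := hasDerivAt_px (hasDerivAt_msq_left dq.differentiableAt).differentiableAt
  have dF := ((((dm.fun_pow 3).const_mul (5 / 2 : ℂ)).fun_add
    ((dm.const_mul (3 * I)).fun_mul ((dqx.fun_mul dq.star).fun_sub (dq.fun_mul dqx.star)))).fun_sub
    ((dqxx.fun_mul dq.star).fun_add (dq.fun_mul dqxx.star))).fun_add (dqx.fun_mul dqx.star)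
  simp only [fluxF, px_conj]
  refine dF.congr_deriv ?_
  simp only [star_def, Nat.cast_ofNat]
  ring

theorem TOFKN.hasDerivAt_fluxF_pt_msq (h : TOFKN q) (hqx : ContDiff ℝ 3 fun y => q (y, t))
    (hqt : DifferentiableAt ℝ (fun s => q (x, s)) t) :
    HasDerivAt (fun y => fluxF q (y, t)) (pt (msq q) (x, t)) x := by
  have hd := hqx.differentiable three_ne_zero x
  have hdx := (contDiff_px (n := 2) hqx).differentiable two_ne_zero x
  refine (hasDerivAt_fluxF hqx).congr_deriv ?_
  rw [pt_msq hqt, h.pt_eq hd hdx, px_msq hd]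
  simp only [msq, map_add, map_mul, map_neg, map_div₀, map_pow, conj_I, conj_conj, map_ofNat]
  ring

end LocalConservationLaw

theorem mass_conserved_general (q : ℝ × ℝ → ℂ)
    (hqx : ∀ t : ℝ, ContDiff ℝ 3 fun x => q (x, t))
    (hqt : ∀ x : ℝ, Differentiable ℝ fun t => q (x, t)) (hTOFKN : TOFKN q)
    (hint : ∀ t : ℝ, Integrable (fun x : ℝ => msq q (x, t))) (ℓ : ℝ → ℂ)
    (hfluxTop : ∀ t : ℝ, Tendsto (fun x : ℝ => fluxF q (x, t)) atTop (nhds (ℓ t)))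
    (hfluxBot : ∀ t : ℝ, Tendsto (fun x : ℝ => fluxF q (x, t)) atBot (nhds (ℓ t)))
    (hdom : ∀ a b : ℝ, ∃ g : ℝ → ℝ, Integrable g ∧
      ∀ x : ℝ, ∀ t ∈ Set.Icc a b, ‖pt (msq q) (x, t)‖ ≤ g x) (t₁ t₂ : ℝ) :
    (∫ x : ℝ, msq q (x, t₁)) = ∫ x : ℝ, msq q (x, t₂) := by
  have mass_deriv (t : ℝ) : HasDerivAt (fun τ => ∫ x : ℝ, msq q (x, τ)) 0 t := by
    obtain ⟨g, hg, hle⟩ := hdom (t - 1) (t + 1)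
    rw [← sub_self (ℓ t)]
    exact hasDerivAt_integral_of_conservation_law (Icc_mem_nhds (by simp) (by simp))
      (.of_forall fun τ => (hint τ).aestronglyMeasurable) (hint t)
      (fun x τ _ => (hasDerivAt_msq_right (hqt x τ)).differentiableAt.hasDerivAt) hg hle
      (fun x => hTOFKN.hasDerivAt_fluxF_pt_msq (hqx t) (hqt x t)) (hfluxBot t) (hfluxTop t)
  exact is_const_of_deriv_eq_zero (fun t => (mass_deriv t).differentiableAt)
    (fun t => (mass_deriv t).deriv) t₁ t₂

/-- for a smooth solution of the TOFKN equation with integrable mass density,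
vanishing flux at spatial infinity, and a locally-uniform integrable domination of
`∂ₜ(|q|²)`, the mass `I₁(t) = ∫ |q(x,t)|² dx` is constant in `t`. -/
theorem mass_conserved (q : ℝ × ℝ → ℂ) (hq : ContDiff ℝ (⊤ : ℕ∞) q) (hTOFKN : TOFKN q)
    (hint : ∀ t : ℝ, Integrable (fun x : ℝ => msq q (x, t)))
    (hint' : ∀ t : ℝ, Integrable (fun x : ℝ => pt (msq q) (x, t)))
    (hfluxTop : ∀ t : ℝ, Tendsto (fun x : ℝ => fluxF q (x, t)) atTop (nhds 0))
    (hfluxBot : ∀ t : ℝ, Tendsto (fun x : ℝ => fluxF q (x, t)) atBot (nhds 0))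
    (hdom : ∀ a b : ℝ, ∃ g : ℝ → ℝ, Integrable g ∧
      ∀ x : ℝ, ∀ t ∈ Set.Icc a b, ‖pt (msq q) (x, t)‖ ≤ g x) :
    ∀ t₁ t₂ : ℝ, (∫ x : ℝ, msq q (x, t₁)) = ∫ x : ℝ, msq q (x, t₂) :=
  mass_conserved_general q
    (fun t => (hq.comp (contDiff_id.prodMk contDiff_const)).of_le (by norm_cast))
    (fun x => (hq.comp (contDiff_const.prodMk contDiff_id)).differentiable (by simp))
    hTOFKN hint (fun _ => 0) hfluxTop hfluxBot hdom
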